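/- Let n ≥ 4 be an integer and let h be the admissible corrector. Then there exists a constant λ' ∈ ℝ such that z^{δ'−2}(h(z) − λ₀ z^{2−δ}) → λ' as z → ∞, where δ' = (√(4nδ(δ+1)+1) − 1)/2 if n ≤ 5 and δ' = 2δ + 1 if n ≥ 6. -/

import Mathlib

noncomputable def kap : ℝ := 1 / Real.sqrt Real.pi

noncomputable def kap3 : ℝ := -kap / 12

noncomputable def gam (n : ℕ) : ℝ := 1 / (2 * (n : ℝ) + 1)

noncomputable def eps (n : ℕ) : ℝ := 1 / ((n : ℝ) - 1)

noncomputable def alph (n : ℕ) : ℝ := 1 / 2 - gam n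

noncomputable def del (n : ℕ) : ℝ := ((n : ℝ) + 2) / ((n : ℝ) - 1)

noncomputable def lam (n : ℕ) : ℝ :=
  (del n * (del n + 1) / (2 * kap) ^ n) ^ (1 / ((n : ℝ) - 1))

noncomputable def lam0 (n : ℕ) : ℝ :=
  (lam n / (2 * kap)) *
    (-2 * (n : ℝ) * kap3 * del n * (del n + 1) - kap * (del n - 2 * eps n)) /
    (((n : ℝ) - 1) * del n * (del n + 1) + 2 * (2 * del n - 1))

def IsReactiveProfile (n : ℕ) (η : ℝ → ℝ) : Prop :=
  ContDiffOn ℝ 2 η (Set.Ici 0) ∧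
  (∀ z ∈ Set.Ici (0:ℝ), 0 < η z) ∧
  (∀ z ∈ Set.Ici (0:ℝ),
    derivWithin (derivWithin η (Set.Ici 0)) (Set.Ici 0) z
      = (2 * kap * z * η z + (η z) ^ 2) ^ n) ∧
  derivWithin η (Set.Ici 0) 0 = -kap ∧
  Filter.Tendsto η Filter.atTop (nhds 0)

/-- The corrector h: C² on [0,∞), satisfies
h'' + γη + αzη' = n(2κzη+η²)^{n−1}((2κz+2η)h + 2κ₃z³η), h'(0) = 0,
h(z) − λ₀ z^{2−δ} → 0 as z → ∞. -/
def IsCorrector (n : ℕ) (η h : ℝ → ℝ) : Prop :=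
  ContDiffOn ℝ 2 h (Set.Ici 0) ∧
  (∀ z ∈ Set.Ici (0:ℝ),
    derivWithin (derivWithin h (Set.Ici 0)) (Set.Ici 0) z + gam n * η z
        + alph n * z * derivWithin η (Set.Ici 0) z
      = (n : ℝ) * (2 * kap * z * η z + (η z) ^ 2) ^ (n - 1)
          * ((2 * kap * z + 2 * η z) * h z + 2 * kap3 * z ^ 3 * η z)) ∧
  derivWithin h (Set.Ici 0) 0 = 0 ∧
  Filter.Tendsto (fun z : ℝ => h z - lam0 n * z ^ (2 - del n)) Filter.atTop (nhds 0)

noncomputable def delp (n : ℕ) : ℝ :=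
  if n ≤ 5 then (Real.sqrt (4 * (n : ℝ) * del n * (del n + 1) + 1) - 1) / 2
  else 2 * del n + 1

/-!
The profile satisfies `z ^ δ * η → L`: on `z + s > 0` the translates `L * (z + s) ^ (-δ)` solve
`B'' = (2 κ (z + s) B) ^ n`, so for suitable `s` of either sign they are sub- and supersolutions of
the profile equation and trap `η` up to a relative error `O(1 / z)`.

Linearizing around `L * z ^ (-δ)`, the deviation of `η` satisfies an Euler equation
`w'' = μ (μ + 1) / z ^ 2 * w + g` with `μ (μ + 1) = n δ (δ + 1)`, whose decaying homogeneous
solution is `z ^ (-μ)`. Comparison with powers of `z` shows that `w` gains the decay of `z ^ 2 * g`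
when it is slower than `z ^ (-μ)` and decays like `z ^ (-μ)` otherwise. The term `η ^ 2` of the
source contributes a forcing asymptotic to a multiple of `z ^ (-(2 δ + 3))`, so `η - L * z ^ (-δ)`
is of order `z ^ (-min μ (2 δ + 1))`. Since `2 δ + 1 < μ` amounts to `3 δ < n`, that is `n ≥ 6`, the
minimum is `δ'`.

The corrector solves an Euler equation with the same `μ`, whose coefficient and right-hand side
approach their limits at the rate `z ^ (-(δ' - δ))` inherited from `η`. Hence
`h - λ₀ * z ^ (2 - δ)` solves an Euler equation with forcing of order `z ^ (-δ')`, and since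
`δ' - 2 < μ` it has order `z ^ (-(δ' - 2))`.
-/

open Filter Topology Set Asymptotics

/-! ### Comparison principle -/

lemma deriv2_nonneg_of_isLocalMin {f f' : ℝ → ℝ} {a c : ℝ} (hmin : IsLocalMin f a)
    (hf : ∀ᶠ x in 𝓝 a, HasDerivAt f (f' x) x) (hf' : HasDerivAt f' c a) : 0 ≤ c := by
  by_contra! hc
  have hderiv : deriv f =ᶠ[𝓝 a] f' := hf.mono fun x hx => hx.deriv
  have hderiv2 : deriv (deriv f) a = c := hderiv.deriv_eq.trans hf'.deriv
  have hmax : IsLocalMax f a := isLocalMax_of_deriv_deriv_neg (hderiv2 ▸ hc)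
    hmin.deriv_eq_zero hf.self_of_nhds.continuousAt
  have hconst : f =ᶠ[𝓝 a] fun _ => f a := by
    filter_upwards [hmin, hmax] with x hx hx' using le_antisymm hx' hx
  have hzero : deriv (deriv f) a = 0 := by
    rw [hconst.deriv.deriv_eq]
    simp
  linarith

lemma nonneg_of_deriv2_neg_of_neg {u u' u'' : ℝ → ℝ} {Z : ℝ}
    (hu : ∀ z ≥ Z, HasDerivAt u (u' z) z) (hu' : ∀ z ≥ Z, HasDerivAt u' (u'' z) z)
    (hneg : ∀ z ≥ Z, u z < 0 → u'' z < 0) (hZ : 0 ≤ u Z) (hlim : Tendsto u atTop (𝓝 0)) :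
    ∀ z ≥ Z, 0 ≤ u z := by
  by_contra! ⟨y, hy, huy⟩
  have hfar : ∀ᶠ x in cocompact ℝ ⊓ 𝓟 (Ici Z), u y ≤ u x := by
    rw [cocompact_eq_atBot_atTop, inf_sup_right, (disjoint_atBot_principal_Ici Z).eq_bot,
      bot_sup_eq]
    exact (hlim.eventually (lt_mem_nhds huy)).filter_mono inf_le_left |>.mono fun _ h => h.le
  obtain ⟨x, hx, hmin⟩ := ContinuousOn.exists_isMinOn'
    (fun x hx => (hu x hx).continuousAt.continuousWithinAt) isClosed_Ici hy hfar
  have hux : u x < 0 := (hmin hy).trans_lt huy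
  have hZx : Z < x := lt_of_le_of_ne hx fun h => by
    rw [← h] at hux
    linarith
  have hnear : ∀ᶠ t in 𝓝 x, Z ≤ t := (lt_mem_nhds hZx).mono fun _ h => h.le
  exact (hneg x hx hux).not_ge <| deriv2_nonneg_of_isLocalMin (hmin.isLocalMin hnear)
    (hnear.mono hu) (hu' x hx)

lemma le_of_subsolution_of_supersolution {F : ℝ → ℝ → ℝ} {S : Set ℝ} {Z : ℝ}
    {φ φ' φ'' ψ ψ' ψ'' : ℝ → ℝ} (hF : ∀ z ≥ Z, StrictMonoOn (F z) S)
    (hφ : ∀ z ≥ Z, HasDerivAt φ (φ' z) z) (hφ' : ∀ z ≥ Z, HasDerivAt φ' (φ'' z) z)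
    (hψ : ∀ z ≥ Z, HasDerivAt ψ (ψ' z) z) (hψ' : ∀ z ≥ Z, HasDerivAt ψ' (ψ'' z) z)
    (hφS : ∀ z ≥ Z, φ z ∈ S) (hψS : ∀ z ≥ Z, ψ z ∈ S)
    (hsub : ∀ z ≥ Z, F z (φ z) ≤ φ'' z) (hsuper : ∀ z ≥ Z, ψ'' z ≤ F z (ψ z))
    (hZ : φ Z ≤ ψ Z) (hlim : Tendsto (fun z => ψ z - φ z) atTop (𝓝 0)) :
    ∀ z ≥ Z, φ z ≤ ψ z := by
  have h := nonneg_of_deriv2_neg_of_neg (fun z hz => (hψ z hz).sub (hφ z hz))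
    (fun z hz => (hψ' z hz).sub (hφ' z hz)) (fun z hz hlt => ?_) (sub_nonneg.2 hZ) hlim
  · exact fun z hz => sub_nonneg.1 (h z hz)
  · have := hF z hz (hψS z hz) (hφS z hz) (sub_neg.1 hlt)
    linarith [hsub z hz, hsuper z hz]

/-! ### Power rates at infinity -/

lemma hasDerivAt_const_mul_rpow (c p : ℝ) {z : ℝ} (hz : 0 < z) :
    HasDerivAt (fun t : ℝ => c * t ^ p) (c * p * z ^ (p - 1)) z :=
  ((Real.hasDerivAt_rpow_const (Or.inl hz.ne')).const_mul c).congr_deriv (mul_assoc _ _ _).symm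

lemma hasDerivAt_const_mul_rpow_sub_one (c p : ℝ) {z : ℝ} (hz : 0 < z) :
    HasDerivAt (fun t : ℝ => c * t ^ (p - 1)) (c * (p - 1) * z ^ (p - 2)) z :=
  (hasDerivAt_const_mul_rpow c (p - 1) hz).congr_deriv (by ring_nf)

lemma rpow_isBigO_rpow_of_le {a b : ℝ} (hab : a ≤ b) :
    (fun z : ℝ => z ^ a) =O[atTop] fun z => z ^ b := by
  refine IsBigO.of_norm_eventuallyLE ?_
  filter_upwards [eventually_ge_atTop 1] with z hz
  rw [Real.norm_of_nonneg (by positivity)]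
  exact Real.rpow_le_rpow_of_exponent_le hz hab

lemma isBigO_rpow_mul_iff {a b : ℝ} {f : ℝ → ℝ} :
    (fun z => z ^ a * f z) =O[atTop] (fun z => z ^ b) ↔ f =O[atTop] fun z => z ^ (b - a) := by
  constructor <;> intro h
  · refine ((isBigO_refl (fun z : ℝ => z ^ (-a)) atTop).mul h).congr' ?_ ?_ <;>
      filter_upwards [eventually_gt_atTop 0] with z hz
    · rw [← mul_assoc, ← Real.rpow_add hz, neg_add_cancel, Real.rpow_zero, one_mul]
    · rw [← Real.rpow_add hz, neg_add_eq_sub]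
  · refine ((isBigO_refl (fun z : ℝ => z ^ a) atTop).mul h).congr' .rfl ?_
    filter_upwards [eventually_gt_atTop 0] with z hz
    rw [← Real.rpow_add hz, add_sub_cancel]

lemma tendsto_rpow_mul_iff_isLittleO {a l : ℝ} {f : ℝ → ℝ} :
    Tendsto (fun z => z ^ a * f z) atTop (𝓝 l) ↔
      (fun z => f z - l * z ^ (-a)) =o[atTop] fun z => z ^ (-a) := by
  have hpos : ∀ᶠ z : ℝ in atTop, 0 < z ^ (-a) :=
    (eventually_gt_atTop 0).mono fun z hz => Real.rpow_pos_of_pos hz _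
  rw [isLittleO_iff_tendsto' (hpos.mono fun z hz h0 => absurd h0 hz.ne'),
    ← tendsto_sub_nhds_zero_iff]
  refine tendsto_congr' ?_
  filter_upwards [eventually_gt_atTop 0] with z hz
  rw [Real.rpow_neg hz.le]
  field_simp

/-- `f z` tends to `c` as `z → ∞` with a remainder of order `z ^ (-a)`, in the sharp sense that
`z ^ a * (f z - c)` converges; the limit may vanish. -/
def TendstoAtRate (a : ℝ) (f : ℝ → ℝ) (c : ℝ) : Prop :=
  ∃ l, Tendsto (fun z => z ^ a * (f z - c)) atTop (𝓝 l)

namespace TendstoAtRate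

variable {a c d : ℝ} {f g : ℝ → ℝ}

lemma tendsto (ha : 0 < a) (hf : TendstoAtRate a f c) : Tendsto f atTop (𝓝 c) := by
  obtain ⟨l, hl⟩ := hf
  have h := (hl.mul (tendsto_rpow_neg_atTop ha)).add_const c
  rw [mul_zero, zero_add] at h
  refine h.congr' ?_
  filter_upwards [eventually_gt_atTop 0] with z hz
  rw [Real.rpow_neg hz.le]
  field_simp
  ring

lemma congr' (hf : TendstoAtRate a f c) (hfg : f =ᶠ[atTop] g) : TendstoAtRate a g c :=
  hf.imp fun _ hl => hl.congr' (hfg.mono fun z hz => by simp only [hz])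

lemma const (a c : ℝ) : TendstoAtRate a (fun _ => c) c :=
  ⟨0, by simp⟩

lemma rpow_neg {b : ℝ} (hab : a ≤ b) : TendstoAtRate a (fun z => z ^ (-b)) 0 := by
  have h : (fun z : ℝ => z ^ (a - b)) =ᶠ[atTop] fun z => z ^ a * (z ^ (-b) - 0) := by
    filter_upwards [eventually_gt_atTop 0] with z hz
    rw [sub_zero, ← Real.rpow_add hz, sub_eq_add_neg]
  rcases hab.eq_or_lt with rfl | hlt
  · exact ⟨1, (tendsto_const_nhds.congr' (by simp [EventuallyEq])).congr' h⟩
  · exact ⟨0, ((neg_sub b a) ▸ tendsto_rpow_neg_atTop (sub_pos.2 hlt)).congr' h⟩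

lemma add (hf : TendstoAtRate a f c) (hg : TendstoAtRate a g d) :
    TendstoAtRate a (fun z => f z + g z) (c + d) := by
  obtain ⟨l, hl⟩ := hf
  obtain ⟨m, hm⟩ := hg
  exact ⟨l + m, (hl.add hm).congr fun z => by ring⟩

lemma mul (ha : 0 < a) (hf : TendstoAtRate a f c) (hg : TendstoAtRate a g d) :
    TendstoAtRate a (fun z => f z * g z) (c * d) := by
  have hgd := hg.tendsto ha
  obtain ⟨l, hl⟩ := hf
  obtain ⟨m, hm⟩ := hg
  exact ⟨l * d + c * m, ((hl.mul hgd).add (hm.const_mul c)).congr fun z => by ring⟩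

lemma const_mul (hf : TendstoAtRate a f c) (b : ℝ) :
    TendstoAtRate a (fun z => b * f z) (b * c) :=
  hf.elim fun l hl => ⟨b * l, (hl.const_mul b).congr fun z => by ring⟩

lemma sub (hf : TendstoAtRate a f c) (hg : TendstoAtRate a g d) :
    TendstoAtRate a (fun z => f z - g z) (c - d) := by
  simpa [sub_eq_add_neg] using hf.add (hg.const_mul (-1))

lemma pow (ha : 0 < a) (hf : TendstoAtRate a f c) (m : ℕ) :
    TendstoAtRate a (fun z => f z ^ m) (c ^ m) := by
  induction m with
  | zero => simpa using const a 1
  | succ m ih => simpa only [pow_succ] using ih.mul ha hf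

end TendstoAtRate

/-! ### The Euler equation -/

/-- `w` vanishes at infinity and, for large `z`, solves the forced Euler equation
`w'' = μ (μ + 1) / z ^ 2 * w + g` with derivative `w'`. The homogeneous equation has the solutions
`z ^ (-μ)` and `z ^ (μ + 1)`. -/
structure DecayingEulerSolution (μ : ℝ) (g w w' : ℝ → ℝ) : Prop where
  hasDerivAt : ∀ᶠ z in atTop, HasDerivAt w (w' z) z
  hasDerivAt_deriv : ∀ᶠ z in atTop, HasDerivAt w' (μ * (μ + 1) / z ^ 2 * w z + g z) z
  tendsto_zero : Tendsto w atTop (𝓝 0)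

lemma rpow_neg_sub_two {z : ℝ} (hz : 0 < z) (q : ℝ) : z ^ (-q - 2) = z ^ (-q) / z ^ 2 := by
  rw [Real.rpow_sub hz, Real.rpow_two]

lemma mul_add_one_sub_pos {q μ : ℝ} (hq : 0 < q) (hqμ : q < μ) :
    0 < μ * (μ + 1) - q * (q + 1) := by
  nlinarith

namespace DecayingEulerSolution

variable {μ q c l : ℝ} {g w w' : ℝ → ℝ}

lemma neg (hw : DecayingEulerSolution μ g w w') :
    DecayingEulerSolution μ (fun z => -g z) (fun z => -w z) (fun z => -w' z) where
  hasDerivAt := hw.hasDerivAt.mono fun _ h => h.neg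
  hasDerivAt_deriv := hw.hasDerivAt_deriv.mono fun z h => h.neg.congr_deriv (by ring)
  tendsto_zero := by simpa using hw.tendsto_zero.neg

lemma sub_const_mul_rpow (hw : DecayingEulerSolution μ g w w') (hq : 0 < q) (c : ℝ) :
    DecayingEulerSolution μ
      (fun z => g z + c * (μ * (μ + 1) - q * (q + 1)) * z ^ (-(q + 2)))
      (fun z => w z - c * z ^ (-q)) (fun z => w' z - c * -q * z ^ (-q - 1)) where
  hasDerivAt := by
    filter_upwards [hw.hasDerivAt, eventually_gt_atTop 0] with z h hz
    exact h.sub (hasDerivAt_const_mul_rpow c (-q) hz)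
  hasDerivAt_deriv := by
    filter_upwards [hw.hasDerivAt_deriv, eventually_gt_atTop 0] with z h hz
    refine (h.sub (hasDerivAt_const_mul_rpow_sub_one (c * -q) (-q) hz)).congr_deriv ?_
    rw [neg_add', rpow_neg_sub_two hz]
    ring
  tendsto_zero := by
    simpa using hw.tendsto_zero.sub ((tendsto_rpow_neg_atTop hq).const_mul c)

lemma eventually_forall_ge_le (hw : DecayingEulerSolution μ g w w') (hμ : 0 < μ) (hq : 0 < q) :
    ∀ᶠ T in atTop, ∀ e C : ℝ,
      (∀ z ≥ T, -g z ≤ e * (μ * (μ + 1) - q * (q + 1)) * z ^ (-(q + 2))) →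
      w T ≤ e * T ^ (-q) + C * T ^ (-μ) → ∀ z ≥ T, w z ≤ e * z ^ (-q) + C * z ^ (-μ) := by
  filter_upwards [eventually_forall_ge_atTop.2 hw.hasDerivAt,
    eventually_forall_ge_atTop.2 hw.hasDerivAt_deriv, eventually_gt_atTop 0]
    with T hderiv hderiv2 hT e C hg hwT
  have hpos : ∀ z ≥ T, 0 < z := fun z hz => hT.trans_le hz
  refine le_of_subsolution_of_supersolution (S := univ)
    (F := fun z y => μ * (μ + 1) / z ^ 2 * y + g z)
    (fun z hz x _ y _ hxy => ?_) hderiv hderiv2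
    (fun z hz => (hasDerivAt_const_mul_rpow e (-q) (hpos z hz)).add
      (hasDerivAt_const_mul_rpow C (-μ) (hpos z hz)))
    (fun z hz => (hasDerivAt_const_mul_rpow_sub_one (e * -q) (-q) (hpos z hz)).add
      (hasDerivAt_const_mul_rpow_sub_one (C * -μ) (-μ) (hpos z hz)))
    (fun _ _ => mem_univ _) (fun _ _ => mem_univ _) (fun _ _ => le_rfl) (fun z hz => ?_) hwT ?_
  · have := hpos z hz
    dsimp only
    gcongr
  · have h := hg z hz
    rw [neg_add', rpow_neg_sub_two (hpos z hz)] at h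
    rw [rpow_neg_sub_two (hpos z hz), rpow_neg_sub_two (hpos z hz)]
    linear_combination h
  · simpa using (((tendsto_rpow_neg_atTop hq).const_mul e).add
      ((tendsto_rpow_neg_atTop hμ).const_mul C)).sub hw.tendsto_zero

lemma eventually_forall_ge_abs_le (hw : DecayingEulerSolution μ g w w') (hμ : 0 < μ)
    (hq : 0 < q) :
    ∀ᶠ T in atTop, ∀ e C : ℝ,
      (∀ z ≥ T, |g z| ≤ e * (μ * (μ + 1) - q * (q + 1)) * z ^ (-(q + 2))) →
      |w T| ≤ e * T ^ (-q) + C * T ^ (-μ) → ∀ z ≥ T, |w z| ≤ e * z ^ (-q) + C * z ^ (-μ) := by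
  filter_upwards [hw.eventually_forall_ge_le hμ hq, hw.neg.eventually_forall_ge_le hμ hq]
    with T hupper hlower e C hg hwT z hz
  refine abs_le'.2 ⟨hupper e C (fun y hy => ?_) ((le_abs_self _).trans hwT) z hz,
    hlower e C (fun y hy => ?_) ((neg_le_abs _).trans hwT) z hz⟩
  · exact (neg_le_abs _).trans (hg y hy)
  · exact (neg_neg (g y)).trans_le ((le_abs_self _).trans (hg y hy))

/-! #### Forcing decaying slower than the homogeneous solution -/

lemma eventually_abs_le (hw : DecayingEulerSolution μ g w w') (hq : 0 < q) (hqμ : q < μ)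
    {K ε : ℝ} (hε : 0 < ε)
    (hg : ∀ᶠ z in atTop, |g z| ≤ K * (μ * (μ + 1) - q * (q + 1)) * z ^ (-(q + 2))) :
    ∀ᶠ z in atTop, |w z| ≤ (K + ε) * z ^ (-q) := by
  obtain ⟨T, hcomp, hgT, hT⟩ := ((hw.eventually_forall_ge_abs_le (hq.trans hqμ) hq).and
    ((eventually_forall_ge_atTop.2 hg).and (eventually_gt_atTop 0))).exists
  have hTμ : T ^ (-μ) ≠ 0 := (Real.rpow_pos_of_pos hT _).ne'
  set C := (|w T| - K * T ^ (-q)) / T ^ (-μ) with hC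
  have hsmall : ∀ᶠ z : ℝ in atTop, C * z ^ (-(μ - q)) < ε := by
    have := (tendsto_rpow_neg_atTop (sub_pos.2 hqμ)).const_mul C
    rw [mul_zero] at this
    exact this.eventually (gt_mem_nhds hε)
  filter_upwards [hsmall, eventually_ge_atTop T, eventually_gt_atTop 0] with z hz hTz hz0
  calc |w z| ≤ K * z ^ (-q) + C * z ^ (-μ) :=
        hcomp K C hgT (by rw [hC, div_mul_cancel₀ _ hTμ]; linarith) z hTz
    _ = (K + C * z ^ (-(μ - q))) * z ^ (-q) := by
        rw [add_mul, mul_assoc C, ← Real.rpow_add hz0]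
        ring_nf
    _ ≤ (K + ε) * z ^ (-q) := by gcongr

lemma isBigO_of_forcing_isBigO (hw : DecayingEulerSolution μ g w w') (hq : 0 < q) (hqμ : q < μ)
    (hg : g =O[atTop] fun z => z ^ (-(q + 2))) : w =O[atTop] fun z => z ^ (-q) := by
  obtain ⟨K, hK⟩ := hg.bound
  have hD := mul_add_one_sub_pos hq hqμ
  refine IsBigO.of_bound (K / (μ * (μ + 1) - q * (q + 1)) + 1) ?_
  filter_upwards [hw.eventually_abs_le hq hqμ one_pos (K := K / (μ * (μ + 1) - q * (q + 1)))
    (by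
      filter_upwards [hK, eventually_gt_atTop 0] with z h hz
      rwa [div_mul_cancel₀ _ hD.ne', ← Real.norm_of_nonneg (Real.rpow_nonneg hz.le (-(q + 2)))]),
    eventually_gt_atTop 0] with z h hz
  rwa [Real.norm_of_nonneg (Real.rpow_nonneg hz.le _)]

lemma isLittleO_of_forcing_isLittleO (hw : DecayingEulerSolution μ g w w') (hq : 0 < q)
    (hqμ : q < μ) (hg : g =o[atTop] fun z => z ^ (-(q + 2))) : w =o[atTop] fun z => z ^ (-q) := by
  have hD := mul_add_one_sub_pos hq hqμ
  refine isLittleO_iff.2 fun ε hε => ?_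
  filter_upwards [hw.eventually_abs_le hq hqμ (half_pos hε) (K := ε / 2)
    (by
      filter_upwards [isLittleO_iff.1 hg (mul_pos (half_pos hε) hD), eventually_gt_atTop 0]
        with z h hz
      rwa [← Real.norm_of_nonneg (Real.rpow_nonneg hz.le (-(q + 2)))]),
    eventually_gt_atTop 0] with z h hz
  rwa [Real.norm_of_nonneg (Real.rpow_nonneg hz.le _), ← add_halves ε]

/-- The power `z ^ (-q)` with the right coefficient cancels the leading order of the forcing. -/
lemma tendsto_of_lt (hw : DecayingEulerSolution μ g w w') (hq : 0 < q) (hqμ : q < μ)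
    (hg : Tendsto (fun z => z ^ (q + 2) * g z) atTop (𝓝 c)) :
    Tendsto (fun z => z ^ q * w z) atTop (𝓝 (-c / (μ * (μ + 1) - q * (q + 1)))) := by
  have hD := mul_add_one_sub_pos hq hqμ
  refine tendsto_rpow_mul_iff_isLittleO.2 <|
    (hw.sub_const_mul_rpow hq _).isLittleO_of_forcing_isLittleO hq hqμ ?_
  simpa only [div_mul_cancel₀ _ hD.ne', neg_mul, ← sub_eq_add_neg] using
    tendsto_rpow_mul_iff_isLittleO.1 hg

/-! #### Forcing decaying faster than the homogeneous solution -/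

lemma eventually_forall_ge_sub_le (hw : DecayingEulerSolution μ g w w') (hμ : 0 < μ)
    (hq : 0 < q) {K : ℝ} (hK : 0 ≤ K)
    (hg : ∀ᶠ z in atTop, -g z ≤ K * (q * (q + 1) - μ * (μ + 1)) * z ^ (-(q + 2))) :
    ∀ᶠ T in atTop, ∀ z ≥ T, z ^ μ * w z - T ^ μ * w T ≤ K * T ^ (-(q - μ)) := by
  filter_upwards [hw.eventually_forall_ge_le hμ hq, eventually_forall_ge_atTop.2 hg,
    eventually_gt_atTop 0] with T hcomp hgT hT z hTz
  have hz : 0 < z := hT.trans_le hTz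
  have hbound := hcomp (-K) (T ^ μ * w T + K * T ^ (-(q - μ)))
    (fun y hy => (hgT y hy).trans_eq (by ring))
    (by
      rw [neg_sub, sub_eq_add_neg, Real.rpow_add hT, Real.rpow_neg hT.le μ]
      field_simp
      linarith) z hTz
  have hmul := mul_le_mul_of_nonneg_left hbound (Real.rpow_nonneg hz.le μ)
  rw [mul_add, mul_left_comm _ (_ + _), ← Real.rpow_add hz, add_neg_cancel, Real.rpow_zero,
    mul_one] at hmul
  have hneg : z ^ μ * (-K * z ^ (-q)) ≤ 0 := by
    rw [neg_mul, mul_neg, neg_nonpos]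
    positivity
  linarith

lemma exists_eventually_forall_ge_abs_sub_le (hw : DecayingEulerSolution μ g w w') (hμ : 0 < μ)
    (hμq : μ < q) (hg : g =O[atTop] fun z => z ^ (-(q + 2))) :
    ∃ K, ∀ᶠ T in atTop, ∀ z ≥ T, |z ^ μ * w z - T ^ μ * w T| ≤ K * T ^ (-(q - μ)) := by
  obtain ⟨K, hK, hgK⟩ := hg.exists_nonneg
  have hd := mul_add_one_sub_pos hμ hμq
  have hgK' : ∀ᶠ z in atTop, |g z| ≤
      K / (q * (q + 1) - μ * (μ + 1)) * (q * (q + 1) - μ * (μ + 1)) * z ^ (-(q + 2)) := by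
    filter_upwards [hgK.bound, eventually_gt_atTop 0] with z h hz
    rwa [div_mul_cancel₀ _ hd.ne', ← Real.norm_of_nonneg (Real.rpow_nonneg hz.le (-(q + 2)))]
  have hq := hμ.trans hμq
  have hK' := div_nonneg hK hd.le
  refine ⟨K / (q * (q + 1) - μ * (μ + 1)), ?_⟩
  filter_upwards [
    hw.eventually_forall_ge_sub_le hμ hq hK' (hgK'.mono fun z h => (neg_le_abs _).trans h),
    hw.neg.eventually_forall_ge_sub_le hμ hq hK'
      (hgK'.mono fun z h => (neg_neg (g z)).trans_le ((le_abs_self _).trans h))]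
    with T hupper hlower z hz
  exact abs_le'.2 ⟨hupper z hz, by linarith [hlower z hz]⟩

lemma exists_tendsto_of_lt (hw : DecayingEulerSolution μ g w w') (hμ : 0 < μ) (hμq : μ < q)
    (hg : g =O[atTop] fun z => z ^ (-(q + 2))) :
    ∃ l, Tendsto (fun z => z ^ μ * w z) atTop (𝓝 l) := by
  obtain ⟨K, hK⟩ := hw.exists_eventually_forall_ge_abs_sub_le hμ hμq hg
  have hzero : Tendsto (fun T : ℝ => K * T ^ (-(q - μ))) atTop (𝓝 0) := by
    simpa using (tendsto_rpow_neg_atTop (sub_pos.2 hμq)).const_mul K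
  refine cauchySeq_tendsto_of_complete (Metric.cauchySeq_iff'.2 fun ε hε => ?_)
  obtain ⟨T, hT, hTε⟩ := (hK.and (hzero.eventually (gt_mem_nhds hε))).exists
  exact ⟨T, fun z hz => (hT z hz).trans_lt hTε⟩

end DecayingEulerSolution

lemma tendsto_deriv_zero_of_tendsto_of_deriv2_tendsto_zero {f f' f'' : ℝ → ℝ} {l : ℝ}
    (hf : ∀ᶠ z in atTop, HasDerivAt f (f' z) z) (hf' : ∀ᶠ z in atTop, HasDerivAt f' (f'' z) z)
    (hlim : Tendsto f atTop (𝓝 l)) (hlim'' : Tendsto f'' atTop (𝓝 0)) :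
    Tendsto f' atTop (𝓝 0) := by
  have hincr : Tendsto (fun z => f (z + 1) - f z) atTop (𝓝 0) := by
    simpa using (hlim.comp (tendsto_atTop_add_const_right atTop 1 tendsto_id)).sub hlim
  suffices hdiff : Tendsto (fun z => f (z + 1) - f z - f' z) atTop (𝓝 0) by
    simpa using hincr.sub hdiff
  refine NormedAddGroup.tendsto_nhds_zero.2 fun ε hε => ?_
  have hsmall := NormedAddGroup.tendsto_nhds_zero.1 hlim'' (ε / 2) (half_pos hε)
  filter_upwards [eventually_forall_ge_atTop.2 hf, eventually_forall_ge_atTop.2 hf',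
    eventually_forall_ge_atTop.2 hsmall] with z hfz hfz' hz
  obtain ⟨ξ, ⟨hzξ, hξz⟩, hξ⟩ := exists_hasDerivAt_eq_slope f f' (lt_add_one z)
    (fun x hx => (hfz x hx.1).continuousAt.continuousWithinAt) (fun x hx => hfz x hx.1.le)
  rw [add_sub_cancel_left, div_one] at hξ
  rw [← hξ]
  calc ‖f' ξ - f' z‖ ≤ ε / 2 * ‖ξ - z‖ :=
        (convex_Ici z).norm_image_sub_le_of_norm_hasDerivWithin_le
          (fun x hx => (hfz' x hx).hasDerivWithinAt) (fun x hx => (hz x hx).le) self_mem_Ici hzξ.le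
    _ ≤ ε / 2 * 1 := by
        gcongr
        rw [Real.norm_of_nonneg (by linarith)]
        linarith
    _ < ε := by linarith

namespace DecayingEulerSolution

variable {μ q c l : ℝ} {g w w' : ℝ → ℝ}

lemma deriv_tendsto (hw : DecayingEulerSolution μ g w w') (hq : 0 < q)
    (hg : Tendsto (fun z => z ^ (q + 2) * g z) atTop (𝓝 c))
    (hl : Tendsto (fun z => z ^ q * w z) atTop (𝓝 l)) :
    Tendsto (fun z => z ^ (q + 1) * w' z) atTop (𝓝 (-(μ * (μ + 1) * l + c) / (q + 1))) := by
  have hq1 : -(q + 1) ≠ 0 := by linarith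
  have hderiv2 : Tendsto (fun z => z ^ (q + 2) * (μ * (μ + 1) / z ^ 2 * w z + g z)) atTop
      (𝓝 (μ * (μ + 1) * l + c)) := by
    refine ((hl.const_mul (μ * (μ + 1))).add hg).congr' ?_
    filter_upwards [eventually_gt_atTop 0] with z hz
    rw [Real.rpow_add hz, Real.rpow_two]
    field_simp
  have hzero : Tendsto w' atTop (𝓝 0) := by
    refine tendsto_deriv_zero_of_tendsto_of_deriv2_tendsto_zero hw.hasDerivAt hw.hasDerivAt_deriv
      hw.tendsto_zero ?_
    have := (tendsto_rpow_neg_atTop (by linarith : 0 < q + 2)).mul hderiv2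
    rw [zero_mul] at this
    refine this.congr' ?_
    filter_upwards [eventually_gt_atTop 0] with z hz
    rw [← mul_assoc, ← Real.rpow_add hz, neg_add_cancel, Real.rpow_zero, one_mul]
  have hratio := HasDerivAt.lhopital_zero_atTop (l := 𝓝 ((μ * (μ + 1) * l + c) / -(q + 1)))
    hw.hasDerivAt_deriv
    ((eventually_gt_atTop 0).mono fun z hz =>
      Real.hasDerivAt_rpow_const (p := -(q + 1)) (Or.inl hz.ne'))
    ((eventually_gt_atTop 0).mono fun z hz => mul_ne_zero hq1 (Real.rpow_pos_of_pos hz _).ne')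
    hzero (tendsto_rpow_neg_atTop (by linarith)) (by
      refine (hderiv2.div_const (-(q + 1))).congr' ?_
      filter_upwards [eventually_gt_atTop 0] with z hz
      rw [show -(q + 1) - 1 = -(q + 2) by ring, Real.rpow_neg hz.le]
      field_simp)
  rw [neg_div, ← div_neg]
  refine hratio.congr' ?_
  filter_upwards [eventually_gt_atTop 0] with z hz
  rw [Real.rpow_neg hz.le]
  field_simp

end DecayingEulerSolution

/-! #### Perturbed coefficients -/

/-- The choice of `l₀` makes `l₀ * z ^ (-p)` a solution to leading order, so that the deviation
`h - l₀ * z ^ (-p)` solves an Euler equation whose forcing is smaller by `z ^ (-a)`. -/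
lemma tendstoAtRate_of_perturbed_euler {μ p a b l₀ : ℝ} {h h' A B : ℝ → ℝ}
    (hpa : 0 < p + a) (hμ : p + a < μ)
    (hh : ∀ᶠ z in atTop, HasDerivAt h (h' z) z)
    (hh' : ∀ᶠ z in atTop, HasDerivAt h' (A z / z ^ 2 * h z + z ^ (-(p + 2)) * B z) z)
    (hA : TendstoAtRate a A (μ * (μ + 1))) (hB : TendstoAtRate a B b)
    (hbalance : (p * (p + 1) - μ * (μ + 1)) * l₀ = b)
    (hlead : Tendsto (fun z => z ^ p * h z) atTop (𝓝 l₀))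
    (hdev : Tendsto (fun z => h z - l₀ * z ^ (-p)) atTop (𝓝 0)) :
    TendstoAtRate a (fun z => z ^ p * h z) l₀ := by
  have hsol : DecayingEulerSolution μ
      (fun z => z ^ (-(p + 2)) * ((A z - μ * (μ + 1)) * (z ^ p * h z) + (B z - b)))
      (fun z => h z - l₀ * z ^ (-p)) (fun z => h' z - l₀ * -p * z ^ (-p - 1)) :=
    { hasDerivAt := by
        filter_upwards [hh, eventually_gt_atTop 0] with z hz hz0
        exact hz.sub (hasDerivAt_const_mul_rpow l₀ (-p) hz0)
      hasDerivAt_deriv := by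
        filter_upwards [hh', eventually_gt_atTop 0] with z hz hz0
        refine (hz.sub (hasDerivAt_const_mul_rpow_sub_one (l₀ * -p) (-p) hz0)).congr_deriv ?_
        rw [neg_add', rpow_neg_sub_two hz0, Real.rpow_neg hz0.le, ← hbalance]
        field_simp
        ring
      tendsto_zero := hdev }
  obtain ⟨lA, hlA⟩ := hA
  obtain ⟨lB, hlB⟩ := hB
  refine ⟨_, (hsol.tendsto_of_lt hpa hμ (c := lA * l₀ + lB) ?_).congr' ?_⟩
  · refine ((hlA.mul hlead).add hlB).congr' ?_
    filter_upwards [eventually_gt_atTop 0] with z hz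
    rw [show p + a + 2 = a + (p + 2) by ring, Real.rpow_add hz a, Real.rpow_neg hz.le]
    field_simp
  · filter_upwards [eventually_gt_atTop 0] with z hz
    rw [add_comm p, Real.rpow_add hz, Real.rpow_neg hz.le]
    field_simp

/-! ### Exponents -/

/-- The exponent `μ > 0` with `μ (μ + 1) = n δ (δ + 1)`: the equation linearized around the leading
profile `λ z ^ (-δ)` is an Euler equation whose decaying solution is `z ^ (-μ)`. -/
noncomputable def decayExponent (n : ℕ) : ℝ :=
  (√(4 * (n : ℝ) * del n * (del n + 1) + 1) - 1) / 2

section Exponents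

variable {n : ℕ}

lemma del_mul_sub_one (hn : 2 ≤ n) : del n * ((n : ℝ) - 1) = n + 2 := by
  have : (2 : ℝ) ≤ n := mod_cast hn
  exact div_mul_cancel₀ _ (by linarith)

lemma one_lt_del (hn : 2 ≤ n) : 1 < del n := by
  have : (2 : ℝ) ≤ n := mod_cast hn
  nlinarith [del_mul_sub_one hn]

lemma del_pos (hn : 2 ≤ n) : 0 < del n :=
  one_pos.trans (one_lt_del hn)

lemma del_le_two (hn : 4 ≤ n) : del n ≤ 2 := by
  have : (4 : ℝ) ≤ n := mod_cast hn
  nlinarith [del_mul_sub_one (show 2 ≤ n by omega)]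

lemma three_mul_del_lt_iff (hn : 2 ≤ n) : 3 * del n < n ↔ 6 ≤ n := by
  have hδ := del_mul_sub_one hn
  constructor <;> intro h
  · by_contra! hlt
    have h5 : (n : ℝ) ≤ 5 := mod_cast Nat.le_of_lt_succ hlt
    have h2 : (2 : ℝ) ≤ n := mod_cast hn
    nlinarith
  · have h6 : (6 : ℝ) ≤ n := mod_cast h
    nlinarith

lemma three_mul_del_ne (hn : 2 ≤ n) : 3 * del n ≠ n := by
  intro h
  have hδ := del_mul_sub_one hn
  rcases le_or_gt 6 n with h6 | h5
  · exact ((three_mul_del_lt_iff hn).2 h6).ne h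
  · have h5' : (n : ℝ) ≤ 5 := mod_cast Nat.le_of_lt_succ h5
    nlinarith

lemma mul_del_mul_del_add_one (hn : 2 ≤ n) :
    (n : ℝ) * del n * (del n + 1) = (del n + 2) ^ 2 + 2 * n := by
  linear_combination (del n + 2) * del_mul_sub_one hn

lemma decayExponent_mul_add_one (hn : 2 ≤ n) :
    decayExponent n * (decayExponent n + 1) = n * del n * (del n + 1) := by
  have h : 0 ≤ (n : ℝ) * del n * (del n + 1) := by
    rw [mul_del_mul_del_add_one hn]
    positivity
  have hsq := Real.sq_sqrt (by linarith : 0 ≤ 4 * (n : ℝ) * del n * (del n + 1) + 1)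
  unfold decayExponent
  linear_combination hsq / 4

lemma decayExponent_pos (hn : 2 ≤ n) : 0 < decayExponent n := by
  have h : 0 < (n : ℝ) * del n * (del n + 1) := by
    rw [mul_del_mul_del_add_one hn]
    positivity
  have : 1 < √(4 * (n : ℝ) * del n * (del n + 1) + 1) := Real.lt_sqrt_of_sq_lt (by linarith)
  unfold decayExponent
  linarith

lemma lt_decayExponent_iff (hn : 2 ≤ n) {x : ℝ} (hx : 0 ≤ x) :
    x < decayExponent n ↔ x * (x + 1) < n * del n * (del n + 1) := by
  have := decayExponent_pos hn
  rw [← decayExponent_mul_add_one hn]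
  constructor <;> intro h <;> nlinarith

lemma del_add_two_lt_decayExponent (hn : 4 ≤ n) : del n + 2 < decayExponent n := by
  have hn' : (4 : ℝ) ≤ n := mod_cast hn
  have hδ := one_lt_del (show 2 ≤ n by omega)
  rw [lt_decayExponent_iff (by omega) (by linarith), mul_del_mul_del_add_one (by omega)]
  nlinarith [del_le_two hn]

lemma two_mul_del_add_one_lt_decayExponent_iff (hn : 2 ≤ n) :
    2 * del n + 1 < decayExponent n ↔ 6 ≤ n := by
  have hδ := one_lt_del hn
  rw [← three_mul_del_lt_iff hn, lt_decayExponent_iff hn (by linarith),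
    show (2 * del n + 1) * (2 * del n + 1 + 1) = (4 * del n + 2) * (del n + 1) by ring,
    mul_lt_mul_iff_left₀ (by linarith)]
  constructor <;> intro h <;> linarith [del_mul_sub_one hn]

lemma decayExponent_ne_two_mul_del_add_one (hn : 2 ≤ n) :
    decayExponent n ≠ 2 * del n + 1 := by
  intro h
  have hδ := one_lt_del hn
  have hμ := decayExponent_mul_add_one hn
  rw [h] at hμ
  refine three_mul_del_ne hn (mul_right_cancel₀ (by linarith : del n + 1 ≠ 0) ?_)
  linear_combination hμ + (del n + 1) * del_mul_sub_one hn

lemma delp_eq_min (hn : 2 ≤ n) : delp n = min (decayExponent n) (2 * del n + 1) := by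
  have h := two_mul_del_add_one_lt_decayExponent_iff hn
  unfold delp
  split_ifs with h5
  · exact (min_eq_left (not_lt.1 (h.not.2 (by omega)))).symm
  · exact (min_eq_right (h.2 (by omega)).le).symm

lemma delp_le_two_mul_del_add_one (hn : 2 ≤ n) : delp n ≤ 2 * del n + 1 :=
  (delp_eq_min hn).trans_le (min_le_right _ _)

lemma delp_le_decayExponent (hn : 2 ≤ n) : delp n ≤ decayExponent n :=
  (delp_eq_min hn).trans_le (min_le_left _ _)

lemma del_add_two_lt_delp (hn : 4 ≤ n) : del n + 2 < delp n := by
  rw [delp_eq_min (by omega)]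
  exact lt_min (del_add_two_lt_decayExponent hn) (by linarith [one_lt_del (show 2 ≤ n by omega)])

end Exponents

/-! ### Barriers for the profile -/

/-- The coefficient `L` for which `L * z ^ (-δ)` solves `η'' = (2 κ z η) ^ n`. -/
noncomputable def profileCoeff (n : ℕ) (κ : ℝ) : ℝ :=
  (del n * (del n + 1) / (2 * κ) ^ n) ^ (1 / ((n : ℝ) - 1))

/-- Near infinity, `η` is a positive solution of the profile equation
`η'' = (2 κ z η + η ^ 2) ^ n` with derivative `η'`, and it vanishes at infinity. -/
structure IsDecayingProfile (n : ℕ) (κ : ℝ) (η η' : ℝ → ℝ) : Prop where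
  pos : ∀ᶠ z in atTop, 0 < η z
  hasDerivAt : ∀ᶠ z in atTop, HasDerivAt η (η' z) z
  hasDerivAt_deriv : ∀ᶠ z in atTop, HasDerivAt η' ((2 * κ * z * η z + η z ^ 2) ^ n) z
  tendsto_zero : Tendsto η atTop (𝓝 0)

/-- The shifted leading profile `L * (z + s) ^ (-δ)`, a solution of
`B'' = (2 κ (z + s) B) ^ n` on `z + s > 0`. -/
noncomputable def profileBarrier (n : ℕ) (κ s z : ℝ) : ℝ :=
  profileCoeff n κ * (z + s) ^ (-del n)

lemma rpow_mul_add_rpow_neg_sub_one_isBigO (q s : ℝ) :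
    (fun z : ℝ => z ^ q * (z + s) ^ (-q) - 1) =O[atTop] fun z => z ^ (-1 : ℝ) := by
  have hderiv : HasDerivAt (fun t : ℝ => (1 + s * t) ^ (-q)) _ 0 :=
    (((hasDerivAt_id (0 : ℝ)).const_mul s).const_add 1).rpow_const (Or.inl (by simp))
  refine (hderiv.isBigO_sub.comp_tendsto tendsto_inv_atTop_zero).congr' ?_ ?_
  · filter_upwards [eventually_gt_atTop 0, eventually_gt_atTop (-s)] with z hz hzs
    have hzs' : 0 < z + s := by linarith
    rw [Function.comp_apply, show 1 + s * z⁻¹ = (z + s) / z by field_simp,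
      Real.div_rpow hzs'.le hz.le, Real.rpow_neg hz.le]
    simp
    field_simp
  · exact .of_eq (funext fun z => by simp [Real.rpow_neg_one])

lemma strictMonoOn_profileSource {n : ℕ} {κ z : ℝ} (hn : n ≠ 0) (hκz : 0 ≤ κ * z) :
    StrictMonoOn (fun y => (2 * κ * z * y + y ^ 2) ^ n) (Ioi 0) := by
  intro x (hx : 0 < x) y _ hxy
  have : 2 * κ * z * x ≤ 2 * κ * z * y := mul_le_mul_of_nonneg_left hxy.le (by linarith)
  have : 0 ≤ 2 * κ * z * x := mul_nonneg (by linarith) hx.le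
  dsimp only
  gcongr ?_ ^ n
  nlinarith

section Barrier

variable {n : ℕ} {κ : ℝ} {η η' : ℝ → ℝ}

lemma profileCoeff_pos (hn : 2 ≤ n) (hκ : 0 < κ) : 0 < profileCoeff n κ := by
  have hδ := del_pos hn
  unfold profileCoeff
  positivity

lemma two_mul_profileCoeff_pow (hn : 2 ≤ n) (hκ : 0 < κ) :
    (2 * κ * profileCoeff n κ) ^ n = del n * (del n + 1) * profileCoeff n κ := by
  have hδ := del_pos hn
  have hpow : profileCoeff n κ ^ (n - 1) = del n * (del n + 1) / (2 * κ) ^ n := by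
    rw [profileCoeff, ← Nat.cast_pred (by omega), one_div,
      Real.rpow_inv_natCast_pow (by positivity) (by omega)]
  rw [mul_pow, ← mul_pow_sub_one (by omega) (profileCoeff n κ), hpow]
  field_simp

lemma profileBarrier_pos (hn : 2 ≤ n) (hκ : 0 < κ) {s z : ℝ} (hz : 0 < z + s) :
    0 < profileBarrier n κ s z :=
  mul_pos (profileCoeff_pos hn hκ) (Real.rpow_pos_of_pos hz _)

lemma hasDerivAt_profileBarrier (n : ℕ) (κ : ℝ) {s z : ℝ} (hz : 0 < z + s) :
    HasDerivAt (profileBarrier n κ s) (profileCoeff n κ * -del n * (z + s) ^ (-del n - 1)) z :=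
  (hasDerivAt_const_mul_rpow _ _ hz).comp_add_const z s

lemma hasDerivAt_deriv_profileBarrier (hn : 2 ≤ n) (hκ : 0 < κ) {s z : ℝ} (hz : 0 < z + s) :
    HasDerivAt (fun t => profileCoeff n κ * -del n * (t + s) ^ (-del n - 1))
      ((2 * κ * (z + s) * profileBarrier n κ s z) ^ n) z := by
  refine ((hasDerivAt_const_mul_rpow_sub_one _ _ hz).comp_add_const z s).congr_deriv ?_
  have hpow : ((z + s) * (z + s) ^ (-del n)) ^ n = (z + s) ^ (-del n - 2) := by
    nth_rw 1 [← Real.rpow_one (z + s)]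
    rw [← Real.rpow_add hz, ← Real.rpow_natCast, ← Real.rpow_mul hz.le]
    congr 1
    linear_combination -del_mul_sub_one hn
  rw [show 2 * κ * (z + s) * profileBarrier n κ s z =
    2 * κ * profileCoeff n κ * ((z + s) * (z + s) ^ (-del n)) by unfold profileBarrier; ring,
    mul_pow, hpow, two_mul_profileCoeff_pow hn hκ]
  ring

lemma tendsto_profileBarrier (hn : 2 ≤ n) (κ s : ℝ) :
    Tendsto (profileBarrier n κ s) atTop (𝓝 0) := by
  unfold profileBarrier
  simpa using ((tendsto_rpow_neg_atTop (del_pos hn)).comp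
    (tendsto_atTop_add_const_right atTop s tendsto_id)).const_mul (profileCoeff n κ)

lemma antitoneOn_profileBarrier (hn : 2 ≤ n) (hκ : 0 < κ) (s : ℝ) :
    AntitoneOn (profileBarrier n κ s) (Ioi (-s)) := fun x hx y _ hxy =>
  mul_le_mul_of_nonneg_left
    (Real.rpow_le_rpow_of_nonpos (neg_lt_iff_pos_add.1 hx) (by linarith)
      (neg_nonpos.2 (del_pos hn).le)) (profileCoeff_pos hn hκ).le

namespace IsDecayingProfile

lemma eventually_barrier_le (hη : IsDecayingProfile n κ η η') (hn : 2 ≤ n) (hκ : 0 < κ) :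
    ∃ s, ∀ᶠ z in atTop, profileBarrier n κ s z ≤ η z := by
  obtain ⟨T, hpos, hderiv, hderiv2, hT⟩ := ((eventually_forall_ge_atTop.2 hη.pos).and
    ((eventually_forall_ge_atTop.2 hη.hasDerivAt).and
      ((eventually_forall_ge_atTop.2 hη.hasDerivAt_deriv).and (eventually_gt_atTop 0)))).exists
  obtain ⟨s, hsη, hsκ, hs⟩ : ∃ s, profileBarrier n κ s T < η T ∧
      profileBarrier n κ s T < 2 * κ ∧ 1 ≤ s := by
    simp only [profileBarrier, add_comm T]
    have hshift := tendsto_profileBarrier hn κ T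
    exact ((hshift.eventually (gt_mem_nhds (hpos T le_rfl))).and
      ((hshift.eventually (gt_mem_nhds (by positivity))).and (eventually_ge_atTop 1))).exists
  have hzs : ∀ z ≥ T, 0 < z + s := fun z hz => by linarith
  have hBpos : ∀ z ≥ T, 0 < profileBarrier n κ s z := fun z hz =>
    profileBarrier_pos hn hκ (hzs z hz)
  have hlim : Tendsto (fun z => η z - profileBarrier n κ s z) atTop (𝓝 0) := by
    simpa using hη.tendsto_zero.sub (tendsto_profileBarrier hn κ s)
  refine ⟨s, eventually_atTop.2 ⟨T, le_of_subsolution_of_supersolution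
    (fun z hz => strictMonoOn_profileSource (by omega) (mul_nonneg hκ.le (hT.le.trans hz)))
    (fun z hz => hasDerivAt_profileBarrier n κ (hzs z hz))
    (fun z hz => hasDerivAt_deriv_profileBarrier hn hκ (hzs z hz))
    hderiv hderiv2 hBpos hpos (fun z hz => ?_) (fun _ _ => le_rfl) hsη.le hlim⟩⟩
  have hz0 : 0 < z := hT.trans_le hz
  have hB0 := hBpos z hz
  have hB : profileBarrier n κ s z ≤ 2 * κ * s := by
    have hT' : -s < T := neg_lt_iff_pos_add.2 (hzs T le_rfl)
    nlinarith [antitoneOn_profileBarrier hn hκ s hT' (hT'.trans_le hz) hz]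
  gcongr ?_ ^ n
  linear_combination profileBarrier n κ s z * hB

lemma eventually_le_barrier (hη : IsDecayingProfile n κ η η') (hn : 2 ≤ n) (hκ : 0 < κ) :
    ∃ s, ∀ᶠ z in atTop, η z ≤ profileBarrier n κ s z := by
  obtain ⟨T, hpos, hderiv, hderiv2, hT⟩ := ((eventually_forall_ge_atTop.2 hη.pos).and
    ((eventually_forall_ge_atTop.2 hη.hasDerivAt).and
      ((eventually_forall_ge_atTop.2 hη.hasDerivAt_deriv).and (eventually_gt_atTop 0)))).exists
  obtain ⟨s, hsη, hs, hTs⟩ : ∃ s, η T ≤ profileBarrier n κ s T ∧ s < 0 ∧ 0 < T + s := by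
    have hblowup := (tendsto_rpow_neg_nhdsGT_zero (neg_neg_of_pos (del_pos hn))).const_mul_atTop
      (profileCoeff_pos hn hκ)
    obtain ⟨t, htη, ht0, htT⟩ := ((hblowup.eventually_ge_atTop (η T)).and
      (Ioo_mem_nhdsGT hT)).exists
    refine ⟨t - T, ?_, by linarith, by linarith⟩
    rwa [profileBarrier, add_sub_cancel]
  have hzs : ∀ z ≥ T, 0 < z + s := fun z hz => by linarith
  have hBpos : ∀ z ≥ T, 0 < profileBarrier n κ s z := fun z hz =>
    profileBarrier_pos hn hκ (hzs z hz)
  have hlim : Tendsto (fun z => profileBarrier n κ s z - η z) atTop (𝓝 0) := by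
    simpa using (tendsto_profileBarrier hn κ s).sub hη.tendsto_zero
  refine ⟨s, eventually_atTop.2 ⟨T, le_of_subsolution_of_supersolution
    (fun z hz => strictMonoOn_profileSource (by omega) (mul_nonneg hκ.le (hT.le.trans hz)))
    hderiv hderiv2 (fun z hz => hasDerivAt_profileBarrier n κ (hzs z hz))
    (fun z hz => hasDerivAt_deriv_profileBarrier hn hκ (hzs z hz))
    hpos hBpos (fun _ _ => le_rfl) (fun z hz => ?_) hsη hlim⟩⟩
  have := hzs z hz
  have hB0 := hBpos z hz
  gcongr ?_ ^ n
  nlinarith [mul_pos (mul_pos hκ (neg_pos.2 hs)) hB0]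

lemma rpow_mul_sub_isBigO (hη : IsDecayingProfile n κ η η') (hn : 2 ≤ n) (hκ : 0 < κ) :
    (fun z => z ^ del n * η z - profileCoeff n κ) =O[atTop] fun z => z ^ (-1 : ℝ) := by
  have hO := fun r : ℝ =>
    ((rpow_mul_add_rpow_neg_sub_one_isBigO (del n) r).const_mul_left (profileCoeff n κ)).norm_left
  obtain ⟨s, hs⟩ := hη.eventually_barrier_le hn hκ
  obtain ⟨t, ht⟩ := hη.eventually_le_barrier hn hκ
  refine IsBigO.trans (IsBigO.of_norm_eventuallyLE ?_) ((hO s).add (hO t))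
  filter_upwards [hs, ht, eventually_gt_atTop 0] with z hsz htz hz
  have hlow := mul_le_mul_of_nonneg_left hsz (Real.rpow_nonneg hz.le (del n))
  have hup := mul_le_mul_of_nonneg_left htz (Real.rpow_nonneg hz.le (del n))
  unfold profileBarrier at hlow hup
  have hmax := abs_le_max_abs_abs (sub_le_sub_right hlow (profileCoeff n κ))
    (sub_le_sub_right hup (profileCoeff n κ))
  refine hmax.trans <| (max_le_add_of_nonneg (abs_nonneg _) (abs_nonneg _)).trans_eq ?_
  simp only [mul_sub_one, mul_left_comm, Real.norm_eq_abs]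

end IsDecayingProfile

end Barrier

/-! ### Second-order expansion of the profile -/

lemma pow_sub_linear_isBigO (y₀ : ℝ) (m : ℕ) :
    (fun y => y ^ m - y₀ ^ m - m * y₀ ^ (m - 1) * (y - y₀)) =O[𝓝 y₀] fun y => (y - y₀) ^ 2 := by
  induction m with
  | zero => simpa using isBigO_zero _ _
  | succ m ih =>
    have hy : (fun y : ℝ => y) =O[𝓝 y₀] fun _ => (1 : ℝ) :=
      (continuous_id.tendsto y₀).isBigO_one ℝ
    have hmul := hy.mul ih
    simp only [one_mul] at hmul
    refine (hmul.add ((isBigO_refl _ _).const_mul_left (m * y₀ ^ (m - 1)))).congr_left fun y => ?_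
    rcases m with _ | m
    · simp
    · push_cast [Nat.add_sub_cancel]
      ring

/-- The source `2 κ z η + η ^ 2` of the profile equation, normalized to converge at infinity. -/
noncomputable def rescaledSource (n : ℕ) (κ : ℝ) (η : ℝ → ℝ) (z : ℝ) : ℝ :=
  z ^ (del n - 1) * (2 * κ * z * η z + η z ^ 2)

/-- The forcing in the Euler equation of the deviation `η - L * z ^ (-δ)`: what remains of the
profile equation after removing the leading balance and the linearization at it. -/
noncomputable def profileForcing (n : ℕ) (κ : ℝ) (η : ℝ → ℝ) (z : ℝ) : ℝ :=
  z ^ (-(del n + 2)) * (rescaledSource n κ η z ^ n - (2 * κ * profileCoeff n κ) ^ n -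
    n * del n * (del n + 1) * (z ^ del n * η z - profileCoeff n κ))

section Profile

variable {n : ℕ} {κ k z : ℝ} {η η' : ℝ → ℝ}

lemma rescaledSource_eq (n : ℕ) (κ : ℝ) (η : ℝ → ℝ) (hz : 0 < z) :
    rescaledSource n κ η z =
      2 * κ * (z ^ del n * η z) + (z ^ del n * η z) ^ 2 * z ^ (-(del n + 1)) := by
  rw [rescaledSource, Real.rpow_sub_one hz.ne', Real.rpow_neg hz.le, Real.rpow_add_one hz.ne']
  have := (Real.rpow_pos_of_pos hz (del n)).ne'
  field_simp

lemma source_pow_eq (hn : 2 ≤ n) (κ : ℝ) (η : ℝ → ℝ) (hz : 0 < z) :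
    (2 * κ * z * η z + η z ^ 2) ^ n = z ^ (-(del n + 2)) * rescaledSource n κ η z ^ n := by
  rw [rescaledSource, mul_pow, ← mul_assoc, ← Real.rpow_mul_natCast hz.le, ← Real.rpow_add hz,
    show -(del n + 2) + (del n - 1) * n = 0 by linear_combination del_mul_sub_one hn,
    Real.rpow_zero, one_mul]

lemma source_pow_pred_eq (hn : 2 ≤ n) (κ : ℝ) (η : ℝ → ℝ) (hz : 0 < z) :
    (2 * κ * z * η z + η z ^ 2) ^ (n - 1) = rescaledSource n κ η z ^ (n - 1) / z ^ 3 := by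
  rw [rescaledSource, mul_pow, ← Real.rpow_mul_natCast hz.le, Nat.cast_pred (by omega),
    show (del n - 1) * ((n : ℝ) - 1) = (3 : ℕ) by push_cast; linear_combination del_mul_sub_one hn,
    Real.rpow_natCast]
  field_simp

lemma nat_mul_two_mul_profileCoeff_pow_pred (hn : 2 ≤ n) (hκ : 0 < κ) :
    n * (2 * κ * profileCoeff n κ) ^ (n - 1) * (2 * κ) = n * del n * (del n + 1) := by
  refine mul_right_cancel₀ (profileCoeff_pos hn hκ).ne' ?_
  have hpow := two_mul_profileCoeff_pow hn hκ
  rw [← pow_sub_one_mul (by omega)] at hpow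
  linear_combination (n : ℝ) * hpow

namespace IsDecayingProfile

lemma tendsto_rpow_mul (hη : IsDecayingProfile n κ η η') (hn : 2 ≤ n) (hκ : 0 < κ) :
    Tendsto (fun z => z ^ del n * η z) atTop (𝓝 (profileCoeff n κ)) :=
  tendsto_sub_nhds_zero_iff.1 <|
    (hη.rpow_mul_sub_isBigO hn hκ).trans_tendsto (tendsto_rpow_neg_atTop one_pos)

lemma tendsto_rescaledSource (hη : IsDecayingProfile n κ η η') (hn : 2 ≤ n) (hκ : 0 < κ) :
    Tendsto (rescaledSource n κ η) atTop (𝓝 (2 * κ * profileCoeff n κ)) := by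
  have hδ := del_pos hn
  have hU := hη.tendsto_rpow_mul hn hκ
  have h := (hU.const_mul (2 * κ)).add
    ((hU.pow 2).mul (tendsto_rpow_neg_atTop (by linarith : 0 < del n + 1)))
  rw [mul_zero, add_zero] at h
  exact h.congr' ((eventually_gt_atTop 0).mono fun z hz => (rescaledSource_eq n κ η hz).symm)

lemma sq_mul_rpow_isBigO (hη : IsDecayingProfile n κ η η') (hn : 2 ≤ n) (hκ : 0 < κ)
    (hk : k ≤ del n + 1) :
    (fun z => (z ^ del n * η z) ^ 2 * z ^ (-(del n + 1))) =O[atTop] fun z => z ^ (-k) := by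
  simpa using (((hη.tendsto_rpow_mul hn hκ).pow 2).isBigO_one ℝ).mul
    (rpow_isBigO_rpow_of_le (neg_le_neg hk))

lemma rescaledSource_sub_isBigO (hη : IsDecayingProfile n κ η η') (hn : 2 ≤ n) (hκ : 0 < κ)
    (hk : k ≤ del n + 1)
    (hU : (fun z => z ^ del n * η z - profileCoeff n κ) =O[atTop] fun z => z ^ (-k)) :
    (fun z => rescaledSource n κ η z - 2 * κ * profileCoeff n κ) =O[atTop] fun z => z ^ (-k) := by
  refine ((hU.const_mul_left (2 * κ)).add (hη.sq_mul_rpow_isBigO hn hκ hk)).congr' ?_ .rfl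
  filter_upwards [eventually_gt_atTop 0] with z hz
  rw [rescaledSource_eq n κ η hz]
  ring

lemma rpow_mul_profileForcing_sub_isBigO (hη : IsDecayingProfile n κ η η') (hn : 2 ≤ n)
    (hκ : 0 < κ) (hk : k ≤ del n + 1)
    (hU : (fun z => z ^ del n * η z - profileCoeff n κ) =O[atTop] fun z => z ^ (-k)) :
    (fun z => z ^ (del n + 2) * profileForcing n κ η z -
      n * (2 * κ * profileCoeff n κ) ^ (n - 1) *
        ((z ^ del n * η z) ^ 2 * z ^ (-(del n + 1)))) =O[atTop] fun z => z ^ (-(2 * k)) := by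
  have hsq := (hη.rescaledSource_sub_isBigO hn hκ hk hU).pow 2
  refine (((pow_sub_linear_isBigO _ n).comp_tendsto (hη.tendsto_rescaledSource hn hκ)).trans
    hsq).congr' ?_ ?_ <;> filter_upwards [eventually_gt_atTop 0] with z hz
  · rw [Function.comp_apply, profileForcing, ← mul_assoc, ← Real.rpow_add hz, add_neg_cancel,
      Real.rpow_zero, ← nat_mul_two_mul_profileCoeff_pow_pred hn hκ]
    linear_combination -(n * (2 * κ * profileCoeff n κ) ^ (n - 1)) * rescaledSource_eq n κ η hz
  · rw [← Real.rpow_mul_natCast hz.le]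
    ring_nf

lemma decayingEulerSolution_sub (hη : IsDecayingProfile n κ η η') (hn : 2 ≤ n) (hκ : 0 < κ) :
    DecayingEulerSolution (decayExponent n) (profileForcing n κ η)
      (fun z => η z - profileCoeff n κ * z ^ (-del n))
      (fun z => η' z - profileCoeff n κ * -del n * z ^ (-del n - 1)) where
  hasDerivAt := by
    filter_upwards [hη.hasDerivAt, eventually_gt_atTop 0] with z h hz
    exact h.sub (hasDerivAt_const_mul_rpow _ _ hz)
  hasDerivAt_deriv := by
    filter_upwards [hη.hasDerivAt_deriv, eventually_gt_atTop 0] with z h hz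
    refine (h.sub (hasDerivAt_const_mul_rpow_sub_one _ _ hz)).congr_deriv ?_
    rw [decayExponent_mul_add_one hn, profileForcing, source_pow_eq hn κ η hz,
      two_mul_profileCoeff_pow hn hκ, neg_add', rpow_neg_sub_two hz, Real.rpow_neg hz.le]
    field_simp
    ring
  tendsto_zero := by
    simpa using hη.tendsto_zero.sub
      ((tendsto_rpow_neg_atTop (del_pos hn)).const_mul (profileCoeff n κ))

lemma rpow_mul_sub_isBigO_neg_two (hη : IsDecayingProfile n κ η η') (hn : 4 ≤ n) (hκ : 0 < κ) :
    (fun z => z ^ del n * η z - profileCoeff n κ) =O[atTop] fun z => z ^ (-2 : ℝ) := by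
  have hn2 : 2 ≤ n := by omega
  have hδ := one_lt_del hn2
  have hG : (fun z => z ^ (del n + 2) * profileForcing n κ η z) =O[atTop]
      fun z => z ^ (-2 : ℝ) := by
    have h := hη.rpow_mul_profileForcing_sub_isBigO hn2 hκ (by linarith)
      (hη.rpow_mul_sub_isBigO hn2 hκ)
    rw [mul_one] at h
    exact (h.add ((hη.sq_mul_rpow_isBigO hn2 hκ (by linarith)).const_mul_left
      (n * (2 * κ * profileCoeff n κ) ^ (n - 1)))).congr_left fun z => sub_add_cancel _ _
  have hw := (hη.decayingEulerSolution_sub hn2 hκ).isBigO_of_forcing_isBigO (q := del n + 2)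
    (by linarith) (del_add_two_lt_decayExponent hn)
    (by rw [isBigO_rpow_mul_iff] at hG; convert hG using 3; ring)
  rw [neg_add_rev, ← sub_eq_add_neg, ← isBigO_rpow_mul_iff] at hw
  refine hw.congr' ?_ .rfl
  filter_upwards [eventually_gt_atTop 0] with z hz
  rw [Real.rpow_neg hz.le]
  field_simp

lemma tendsto_rpow_mul_profileForcing (hη : IsDecayingProfile n κ η η') (hn : 4 ≤ n)
    (hκ : 0 < κ) :
    Tendsto (fun z => z ^ (2 * del n + 3) * profileForcing n κ η z) atTop
      (𝓝 (n * (2 * κ * profileCoeff n κ) ^ (n - 1) * profileCoeff n κ ^ 2)) := by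
  have hn2 : 2 ≤ n := by omega
  have hδ := one_lt_del hn2
  have hR := hη.rpow_mul_profileForcing_sub_isBigO hn2 hκ (by linarith)
    (hη.rpow_mul_sub_isBigO_neg_two hn hκ)
  have hR0 : Tendsto (fun z => z ^ (del n + 1) * (z ^ (del n + 2) * profileForcing n κ η z -
      n * (2 * κ * profileCoeff n κ) ^ (n - 1) *
        ((z ^ del n * η z) ^ 2 * z ^ (-(del n + 1))))) atTop (𝓝 0) := by
    refine (((isBigO_refl (fun z : ℝ => z ^ (del n + 1)) atTop).mul hR).congr' .rfl
      ?_).trans_tendsto (tendsto_rpow_neg_atTop (by linarith [del_le_two hn] : 0 < 3 - del n))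
    filter_upwards [eventually_gt_atTop 0] with z hz
    rw [← Real.rpow_add hz, show del n + 1 + -(2 * 2) = -(3 - del n) by ring]
  have hsum := hR0.add (((hη.tendsto_rpow_mul hn2 hκ).pow 2).const_mul
    (n * (2 * κ * profileCoeff n κ) ^ (n - 1)))
  rw [zero_add] at hsum
  refine hsum.congr' ?_
  filter_upwards [eventually_gt_atTop 0] with z hz
  rw [show 2 * del n + 3 = del n + 1 + (del n + 2) by ring, Real.rpow_add hz (del n + 1),
    Real.rpow_neg hz.le]
  field_simp
  ring

lemma exists_tendsto_rpow_delp_mul_forcing (hη : IsDecayingProfile n κ η η') (hn : 4 ≤ n)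
    (hκ : 0 < κ) :
    ∃ c, Tendsto (fun z => z ^ (delp n + 2) * profileForcing n κ η z) atTop (𝓝 c) := by
  obtain ⟨c, hc⟩ := TendstoAtRate.rpow_neg (delp_le_two_mul_del_add_one (show 2 ≤ n by omega))
  refine ⟨_, (hc.mul (hη.tendsto_rpow_mul_profileForcing hn hκ)).congr' ?_⟩
  filter_upwards [eventually_gt_atTop 0] with z hz
  rw [sub_zero, ← Real.rpow_add hz, ← mul_assoc, ← Real.rpow_add hz]
  ring_nf

lemma exists_tendsto_rpow_delp_mul_sub (hη : IsDecayingProfile n κ η η') (hn : 4 ≤ n)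
    (hκ : 0 < κ) :
    ∃ l, Tendsto (fun z => z ^ delp n * (η z - profileCoeff n κ * z ^ (-del n))) atTop (𝓝 l) := by
  have hn2 : 2 ≤ n := by omega
  have hG := hη.tendsto_rpow_mul_profileForcing hn hκ
  have hsol := hη.decayingEulerSolution_sub hn2 hκ
  rw [delp_eq_min hn2]
  rcases (decayExponent_ne_two_mul_del_add_one hn2).lt_or_gt with hlt | hgt
  · rw [min_eq_left hlt.le]
    refine hsol.exists_tendsto_of_lt (decayExponent_pos hn2) hlt ?_
    have hO : (fun z => z ^ (2 * del n + 3) * profileForcing n κ η z) =O[atTop]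
        fun z => z ^ (0 : ℝ) := by
      simpa only [Real.rpow_zero] using hG.isBigO_one ℝ
    rw [isBigO_rpow_mul_iff] at hO
    convert hO using 3
    ring
  · rw [min_eq_right hgt.le]
    exact ⟨_, hsol.tendsto_of_lt (by linarith [del_pos hn2]) hgt
      (hG.congr fun z => by ring_nf)⟩

lemma tendstoAtRate_rpow_mul (hη : IsDecayingProfile n κ η η') (hn : 4 ≤ n) (hκ : 0 < κ) :
    TendstoAtRate (delp n - del n) (fun z => z ^ del n * η z) (profileCoeff n κ) := by
  refine (hη.exists_tendsto_rpow_delp_mul_sub hn hκ).imp fun l hl => hl.congr' ?_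
  filter_upwards [eventually_gt_atTop 0] with z hz
  rw [Real.rpow_sub hz, Real.rpow_neg hz.le]
  field_simp

lemma tendstoAtRate_rpow_mul_deriv (hη : IsDecayingProfile n κ η η') (hn : 4 ≤ n) (hκ : 0 < κ) :
    TendstoAtRate (delp n - del n) (fun z => z ^ (del n + 1) * η' z)
      (-del n * profileCoeff n κ) := by
  have hn2 : 2 ≤ n := by omega
  obtain ⟨c, hc⟩ := hη.exists_tendsto_rpow_delp_mul_forcing hn hκ
  obtain ⟨l, hl⟩ := hη.exists_tendsto_rpow_delp_mul_sub hn hκ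
  have hd : 0 < delp n := by linarith [del_add_two_lt_delp hn, del_pos hn2]
  refine ⟨_, ((hη.decayingEulerSolution_sub hn2 hκ).deriv_tendsto hd hc hl).congr' ?_⟩
  filter_upwards [eventually_gt_atTop 0] with z hz
  rw [Real.rpow_sub_one hz.ne', Real.rpow_sub hz, Real.rpow_add_one hz.ne',
    Real.rpow_add_one hz.ne', Real.rpow_neg hz.le]
  field_simp

end IsDecayingProfile

end Profile

/-! ### The corrector -/

/-- The coefficient `l₀` for which `l₀ * z ^ (2 - δ)` solves the corrector equation to leading
order. -/
noncomputable def correctorCoeff (n : ℕ) (κ κ₃ γ α : ℝ) : ℝ :=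
  profileCoeff n κ / (2 * κ) *
    (-2 * n * κ₃ * del n * (del n + 1) - 2 * κ * (α * del n - γ)) /
    ((n - 1) * del n * (del n + 1) + 2 * (2 * del n - 1))

/-- Near infinity, `h` is a solution with derivative `h'` of the corrector equation over the profile
`η` with derivative `η'`, and it is asymptotic to `l₀ * z ^ (2 - δ)` up to a vanishing error. -/
structure IsDecayingCorrector (n : ℕ) (κ κ₃ γ α : ℝ) (η η' h h' : ℝ → ℝ) : Prop where
  hasDerivAt : ∀ᶠ z in atTop, HasDerivAt h (h' z) z
  hasDerivAt_deriv : ∀ᶠ z in atTop, HasDerivAt h'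
    (n * (2 * κ * z * η z + η z ^ 2) ^ (n - 1) *
      ((2 * κ * z + 2 * η z) * h z + 2 * κ₃ * z ^ 3 * η z) - γ * η z - α * z * η' z) z
  tendsto_sub_zero :
    Tendsto (fun z => h z - correctorCoeff n κ κ₃ γ α * z ^ (2 - del n)) atTop (𝓝 0)

/-- The function `A` in the form `h'' = A z / z ^ 2 * h + z ^ (-δ) * B z` of the corrector
equation. -/
noncomputable def correctorPotential (n : ℕ) (κ : ℝ) (η : ℝ → ℝ) (z : ℝ) : ℝ :=
  n * rescaledSource n κ η z ^ (n - 1) * (2 * κ + 2 * (z ^ del n * η z * z ^ (-(del n + 1))))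

/-- The function `B` in the form `h'' = A z / z ^ 2 * h + z ^ (-δ) * B z` of the corrector
equation. -/
noncomputable def correctorForcing (n : ℕ) (κ κ₃ γ α : ℝ) (η η' : ℝ → ℝ) (z : ℝ) : ℝ :=
  n * rescaledSource n κ η z ^ (n - 1) * (2 * κ₃ * (z ^ del n * η z)) -
    γ * (z ^ del n * η z) - α * (z ^ (del n + 1) * η' z)

section Corrector

variable {n : ℕ} {κ : ℝ} {η η' : ℝ → ℝ}

lemma correctorCoeff_balance (hn : 2 ≤ n) (hκ : 0 < κ) (κ₃ γ α : ℝ) :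
    ((del n - 2) * (del n - 2 + 1) - n * del n * (del n + 1)) * correctorCoeff n κ κ₃ γ α =
      n * (2 * κ * profileCoeff n κ) ^ (n - 1) * (2 * κ₃ * profileCoeff n κ) -
        γ * profileCoeff n κ - α * (-del n * profileCoeff n κ) := by
  have hδ := one_lt_del hn
  have hden : 0 < ((n : ℝ) - 1) * del n * (del n + 1) + 2 * (2 * del n - 1) := by
    rw [mul_comm ((n : ℝ) - 1), del_mul_sub_one hn]
    nlinarith [(n.cast_nonneg : (0 : ℝ) ≤ n)]
  have hpow := nat_mul_two_mul_profileCoeff_pow_pred hn hκ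
  rw [← eq_div_iff (by positivity)] at hpow
  rw [hpow, correctorCoeff, mul_div_assoc', div_eq_iff hden.ne']
  field_simp
  ring

namespace IsDecayingProfile

lemma tendstoAtRate_rescaledSource (hη : IsDecayingProfile n κ η η') (hn : 4 ≤ n) (hκ : 0 < κ) :
    TendstoAtRate (delp n - del n) (rescaledSource n κ η) (2 * κ * profileCoeff n κ) := by
  have hn2 : 2 ≤ n := by omega
  have hU := hη.tendstoAtRate_rpow_mul hn hκ
  have hrate : 0 < delp n - del n := by linarith [del_add_two_lt_delp hn]
  have hle : delp n - del n ≤ del n + 1 := by linarith [delp_le_two_mul_del_add_one hn2]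
  have h := (hU.const_mul (2 * κ)).add ((hU.pow hrate 2).mul hrate (.rpow_neg hle))
  rw [mul_zero, add_zero] at h
  exact h.congr' ((eventually_gt_atTop 0).mono fun z hz => (rescaledSource_eq n κ η hz).symm)

lemma tendstoAtRate_correctorPotential (hη : IsDecayingProfile n κ η η') (hn : 4 ≤ n)
    (hκ : 0 < κ) :
    TendstoAtRate (delp n - del n) (correctorPotential n κ η)
      (decayExponent n * (decayExponent n + 1)) := by
  have hn2 : 2 ≤ n := by omega
  have hrate : 0 < delp n - del n := by linarith [del_add_two_lt_delp hn]
  have hle : delp n - del n ≤ del n + 1 := by linarith [delp_le_two_mul_del_add_one hn2]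
  have h := (((hη.tendstoAtRate_rescaledSource hn hκ).pow hrate (n - 1)).const_mul n).mul hrate
    ((TendstoAtRate.const _ (2 * κ)).add
      (((hη.tendstoAtRate_rpow_mul hn hκ).mul hrate (.rpow_neg hle)).const_mul 2))
  rwa [mul_zero, mul_zero, add_zero, nat_mul_two_mul_profileCoeff_pow_pred hn2 hκ,
    ← decayExponent_mul_add_one hn2] at h

lemma tendstoAtRate_correctorForcing (hη : IsDecayingProfile n κ η η') (hn : 4 ≤ n)
    (hκ : 0 < κ) (κ₃ γ α : ℝ) :
    TendstoAtRate (delp n - del n) (correctorForcing n κ κ₃ γ α η η')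
      (n * (2 * κ * profileCoeff n κ) ^ (n - 1) * (2 * κ₃ * profileCoeff n κ) -
        γ * profileCoeff n κ - α * (-del n * profileCoeff n κ)) := by
  have hrate : 0 < delp n - del n := by linarith [del_add_two_lt_delp hn]
  have hU := hη.tendstoAtRate_rpow_mul hn hκ
  exact (((((hη.tendstoAtRate_rescaledSource hn hκ).pow hrate (n - 1)).const_mul n).mul hrate
    (hU.const_mul (2 * κ₃))).sub (hU.const_mul γ)).sub
    ((hη.tendstoAtRate_rpow_mul_deriv hn hκ).const_mul α)

end IsDecayingProfile

namespace IsDecayingCorrector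

variable {κ₃ γ α : ℝ} {h h' : ℝ → ℝ}

lemma eventually_hasDerivAt_deriv (hh : IsDecayingCorrector n κ κ₃ γ α η η' h h') (hn : 2 ≤ n) :
    ∀ᶠ z in atTop, HasDerivAt h' (correctorPotential n κ η z / z ^ 2 * h z +
      z ^ (-(del n - 2 + 2)) * correctorForcing n κ κ₃ γ α η η' z) z := by
  filter_upwards [hh.hasDerivAt_deriv, eventually_gt_atTop 0] with z hz hz0
  refine hz.congr_deriv ?_
  rw [source_pow_pred_eq hn κ η hz0, correctorPotential, correctorForcing, sub_add_cancel,
    Real.rpow_neg hz0.le, Real.rpow_neg hz0.le, Real.rpow_add_one hz0.ne']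
  field_simp
  ring

lemma tendsto_rpow_mul (hh : IsDecayingCorrector n κ κ₃ γ α η η' h h') (hn : 4 ≤ n) :
    Tendsto (fun z => z ^ (del n - 2) * h z) atTop (𝓝 (correctorCoeff n κ κ₃ γ α)) := by
  rw [tendsto_rpow_mul_iff_isLittleO, neg_sub]
  refine ((isLittleO_one_iff ℝ).2 hh.tendsto_sub_zero).trans_isBigO ?_
  simpa using rpow_isBigO_rpow_of_le (sub_nonneg.2 (del_le_two hn))

lemma tendstoAtRate_rpow_mul (hh : IsDecayingCorrector n κ κ₃ γ α η η' h h')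
    (hη : IsDecayingProfile n κ η η') (hn : 4 ≤ n) (hκ : 0 < κ) :
    TendstoAtRate (delp n - del n) (fun z => z ^ (del n - 2) * h z)
      (correctorCoeff n κ κ₃ γ α) := by
  have hn2 : 2 ≤ n := by omega
  refine tendstoAtRate_of_perturbed_euler (μ := decayExponent n) ?_ ?_ hh.hasDerivAt
    (hh.eventually_hasDerivAt_deriv hn2) (hη.tendstoAtRate_correctorPotential hn hκ)
    (hη.tendstoAtRate_correctorForcing hn hκ κ₃ γ α) ?_ (hh.tendsto_rpow_mul hn) ?_
  · linarith [del_add_two_lt_delp hn, one_lt_del hn2]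
  · linarith [delp_le_decayExponent hn2]
  · rw [decayExponent_mul_add_one hn2, correctorCoeff_balance hn2 hκ]
  · simpa only [neg_sub] using hh.tendsto_sub_zero

end IsDecayingCorrector

end Corrector

theorem corrector_asymptotics_at_infinity_general {n : ℕ} (hn : 4 ≤ n) {κ κ₃ γ α : ℝ}
    (hκ : 0 < κ) {η η' h h' : ℝ → ℝ} (hη : IsDecayingProfile n κ η η')
    (hh : IsDecayingCorrector n κ κ₃ γ α η η' h h') :
    ∃ l, Tendsto (fun z => z ^ (delp n - 2) * (h z - correctorCoeff n κ κ₃ γ α * z ^ (2 - del n)))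
      atTop (𝓝 l) := by
  refine (hh.tendstoAtRate_rpow_mul hη hn hκ).imp fun l hl => hl.congr' ?_
  filter_upwards [eventually_gt_atTop 0] with z hz
  rw [show delp n - 2 = delp n - del n + (del n - 2) by ring, Real.rpow_add hz,
    ← neg_sub (del n) 2, Real.rpow_neg hz.le]
  field_simp

/-! ### The reactive profile and its corrector -/

lemma kap_pos : 0 < kap := by
  unfold kap
  positivity

lemma lam_eq_profileCoeff (n : ℕ) : lam n = profileCoeff n kap := rfl

lemma lam0_eq_correctorCoeff {n : ℕ} (hn : 2 ≤ n) :
    lam0 n = correctorCoeff n kap kap3 (gam n) (alph n) := by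
  have hn' : (2 : ℝ) ≤ n := mod_cast hn
  have hexp : 2 * (alph n * del n - gam n) = del n - 2 * eps n := by
    have h1 : (n : ℝ) - 1 ≠ 0 := by linarith
    unfold alph gam del eps
    field_simp
    ring
  rw [lam0, correctorCoeff, ← hexp, lam_eq_profileCoeff]
  ring

lemma hasDerivAt_derivWithin_Ici {f : ℝ → ℝ} {a z : ℝ} (hf : DifferentiableOn ℝ f (Ici a))
    (hz : a < z) : HasDerivAt f (derivWithin f (Ici a) z) z :=
  (hf z hz.le).hasDerivWithinAt.hasDerivAt (Ici_mem_nhds hz)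

lemma eventually_hasDerivAt_derivWithin_Ici {f : ℝ → ℝ} {a : ℝ} (hf : ContDiffOn ℝ 2 f (Ici a)) :
    (∀ᶠ z in atTop, HasDerivAt f (derivWithin f (Ici a) z) z) ∧
      ∀ᶠ z in atTop, HasDerivAt (derivWithin f (Ici a))
        (derivWithin (derivWithin f (Ici a)) (Ici a) z) z := by
  have hf' : ContDiffOn ℝ 1 (derivWithin f (Ici a)) (Ici a) :=
    hf.derivWithin (uniqueDiffOn_Ici a) (by norm_num)
  exact ⟨(eventually_gt_atTop a).mono fun z =>
      hasDerivAt_derivWithin_Ici (hf.differentiableOn two_ne_zero),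
    (eventually_gt_atTop a).mono fun z =>
      hasDerivAt_derivWithin_Ici (hf'.differentiableOn one_ne_zero)⟩

lemma IsReactiveProfile.isDecayingProfile {n : ℕ} {η : ℝ → ℝ} (hη : IsReactiveProfile n η) :
    IsDecayingProfile n kap η (derivWithin η (Ici 0)) := by
  obtain ⟨hC2, hpos, hode, -, hlim⟩ := hη
  obtain ⟨hderiv, hderiv2⟩ := eventually_hasDerivAt_derivWithin_Ici hC2
  refine ⟨(eventually_ge_atTop 0).mono hpos, hderiv, ?_, hlim⟩
  filter_upwards [hderiv2, eventually_ge_atTop 0] with z hz hz0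
  exact hode z hz0 ▸ hz

lemma IsCorrector.isDecayingCorrector {n : ℕ} (hn : 2 ≤ n) {η h : ℝ → ℝ}
    (hh : IsCorrector n η h) :
    IsDecayingCorrector n kap kap3 (gam n) (alph n) η (derivWithin η (Ici 0)) h
      (derivWithin h (Ici 0)) := by
  obtain ⟨hC2, hode, -, hlim⟩ := hh
  obtain ⟨hderiv, hderiv2⟩ := eventually_hasDerivAt_derivWithin_Ici hC2
  refine ⟨hderiv, ?_, lam0_eq_correctorCoeff hn ▸ hlim⟩
  filter_upwards [hderiv2, eventually_ge_atTop 0] with z hz hz0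
  refine hz.congr_deriv ?_
  linear_combination hode z hz0

/-- Asymptotics of the corrector at infinity: for some constant λ',
z^{δ'−2}(h(z) − λ₀ z^{2−δ}) → λ' as z → ∞. -/
theorem corrector_asymptotics_at_infinity (n : ℕ) (hn : 4 ≤ n)
    (η : ℝ → ℝ) (hη : IsReactiveProfile n η)
    (h : ℝ → ℝ) (hh : IsCorrector n η h) :
    ∃ lam' : ℝ,
      Filter.Tendsto (fun z : ℝ => z ^ (delp n - 2) * (h z - lam0 n * z ^ (2 - del n)))
        Filter.atTop (nhds lam') := by
  rw [lam0_eq_correctorCoeff (by omega)]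
  exact corrector_asymptotics_at_infinity_general hn kap_pos hη.isDecayingProfile
    (hh.isDecayingCorrector (by omega))
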